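/- arXiv:2401.05859 — 2 statements merged into one kernel-verified Lean document; each statement's English description precedes it below -/
import Mathlib

section
/- Let q > 2, t ≥ 1, and x, x' ∈ Σ_q^n with x ≠ x' and B_{≤t}(x) ∩ B_{≤t}(x') ≠ ∅. Then there exist t' ∈ {1,…,t} and j ∈ {1,…,t'} such that, writing u = x_{I_{t',j}} and u' = x'_{I_{t',j}} where I_{t',j} = {ℓ ∈ [1,n] : ℓ ≡ j (mod t')}, one has (VT(φ(u)_{[2,|u|]}), Sum(u)) ≠ (VT(φ(u')_{[2,|u'|]}), Sum(u')). In other words, the combined syndrome h̄(x) = (VT(φ(x_{I_{t',j}})_{[2,·]}), Sum(x_{I_{t',j}}))_{1 ≤ j ≤ t' ≤ t} separates any two distinct strings whose burst-deletion balls of radius at most t intersect. -/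
/-!
Comparing lengths, the two bursts that lead to a common string have the same size `s`, and `s ≥ 1`
because `x ≠ x'`. A burst of `s` deletions removes exactly one symbol from each residue class of
positions modulo `s` and shifts the later positions by exactly `s`, so for every `j` the
strings `x_{I_{s,j}}` and `x'_{I_{s,j}}` have a common single-deletion descendant. If all syndrome
components agreed, Tenengolts' theorem would make these subsequences equal, whence `x = x'`.

For Tenengolts' theorem, write the two strings as `u = A a D C` and `u' = A D a' C`. The sums modulo
`q` force `a = a'`. A deletion from `u` deletes one bit from `φ(u)_{[2,m]}`, so the binary
Varshamov–Tenengolts theorem gives `φ(u) = φ(u')`. Shifting `D` by one position thus preserves all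
comparisons, so `a D a` is weakly increasing or strictly decreasing throughout; having equal ends,
it is constant, and `u = u'`.
-/

/-- `burst t' x` is the set `B_{t'}(x)` of strings obtained from `x` by
deleting `t'` consecutive symbols. -/
def burst (t' : ℕ) (x : List ℕ) : Set (List ℕ) :=
  {y | ∃ i, i + t' ≤ x.length ∧ y = x.take i ++ x.drop (i + t')}

/-- `burstLe t x` is the set `B_{≤t}(x) = ∪_{t'=0}^{t} B_{t'}(x)`. -/
def burstLe (t : ℕ) (x : List ℕ) : Set (List ℕ) :=
  {y | ∃ t' ≤ t, y ∈ burst t' x}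

/-- The subsequence `x_{I_{t',j}}` of `x` indexed by the 1-indexed positions
`ℓ ∈ [1, |x|]` with `ℓ ≡ j (mod t')`. -/
def residSub (t' j : ℕ) (x : List ℕ) : List ℕ :=
  ((List.range x.length).filter (fun i => (i + 1) % t' == j % t')).map
    (fun i => x.getD i 0)

/-- The (unreduced) VT weight of a string `c = (c_1, …, c_m)`:
`Σ_{i=1}^m i·c_i`, with 1-indexed positions. -/
def vtSum (c : List ℕ) : ℕ := ∑ i ∈ Finset.range c.length, (i + 1) * c.getD i 0

/-- For `u ∈ Σ_q^m`, this is `φ(u)_{[2,m]}`: the binary string of length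
`m-1` whose `i`-th entry is `1` iff `u_{i+1} ≥ u_i`. -/
def phiTail (u : List ℕ) : List ℕ :=
  List.zipWith (fun a b => if a ≤ b then 1 else 0) u u.tail

lemma mem_burst_iff {t : ℕ} {x y : List ℕ} :
    y ∈ burst t x ↔ ∃ A T C : List ℕ, T.length = t ∧ x = A ++ (T ++ C) ∧ y = A ++ C := by
  constructor
  · rintro ⟨i, hi, rfl⟩
    refine ⟨x.take i, (x.drop i).take t, x.drop (i + t), by grind, ?_, rfl⟩
    rw [← List.drop_drop, List.take_append_drop, List.take_append_drop]
  · rintro ⟨A, T, C, rfl, rfl, rfl⟩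
    exact ⟨A.length, by simp, by simp [← List.drop_drop]⟩

lemma mem_burst_one_iff {w u : List ℕ} :
    w ∈ burst 1 u ↔ ∃ (A : List ℕ) (a : ℕ) (C : List ℕ), u = A ++ a :: C ∧ w = A ++ C := by
  simp [mem_burst_iff, List.length_eq_one_iff]

lemma length_add_of_mem_burst {t : ℕ} {x y : List ℕ} (h : y ∈ burst t x) :
    y.length + t = x.length := by
  obtain ⟨A, T, C, rfl, rfl, rfl⟩ := mem_burst_iff.1 h
  simp only [List.length_append]
  omega

lemma eq_of_mem_burst_zero {x y : List ℕ} (h : y ∈ burst 0 x) : y = x := by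
  obtain ⟨i, -, rfl⟩ := h
  exact List.take_append_drop i x

lemma exists_burst_inter_nonempty {t : ℕ} {x x' : List ℕ} (hlen : x.length = x'.length)
    (h : (burstLe t x ∩ burstLe t x').Nonempty) :
    ∃ s ≤ t, (burst s x ∩ burst s x').Nonempty := by
  obtain ⟨y, ⟨s, hs, hy⟩, s', -, hy'⟩ := h
  have hl := length_add_of_mem_burst hy
  have hl' := length_add_of_mem_burst hy'
  obtain rfl : s = s' := by omega
  exact ⟨s, hs, y, hy, hy'⟩

lemma exists_aligned_insertions {u u' w : List ℕ} (hu : w ∈ burst 1 u) (hu' : w ∈ burst 1 u') :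
    ∃ (A D C : List ℕ) (a a' : ℕ),
      (u = A ++ a :: (D ++ C) ∧ u' = A ++ (D ++ a' :: C)) ∨
      (u' = A ++ a' :: (D ++ C) ∧ u = A ++ (D ++ a :: C)) := by
  obtain ⟨A, a, C, rfl, rfl⟩ := mem_burst_one_iff.1 hu
  obtain ⟨A', a', C', rfl, hw⟩ := mem_burst_one_iff.1 hu'
  rcases List.append_eq_append_iff.1 hw with ⟨D, rfl, rfl⟩ | ⟨D, rfl, rfl⟩
  · exact ⟨A, D, C', a, a', .inl ⟨rfl, List.append_assoc ..⟩⟩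
  · exact ⟨A', D, C, a, a', .inr ⟨rfl, List.append_assoc ..⟩⟩

lemma cons_append_comm_of_forall_eq {α : Type*} {a : α} {D : List α} (h : ∀ d ∈ D, d = a)
    (C : List α) :
    a :: (D ++ C) = D ++ a :: C := by
  induction D with
  | nil => rfl
  | cons d D ih =>
    obtain ⟨rfl, hD⟩ := List.forall_mem_cons.1 h
    rw [List.cons_append, ih hD, List.cons_append]

lemma vtSum_cons (a : ℕ) (c : List ℕ) : vtSum (a :: c) = a + vtSum c + c.sum := by
  have hsum : c.sum = ∑ i ∈ Finset.range c.length, c.getD i 0 := by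
    induction c with
    | nil => rfl
    | cons b c ih => simp [Finset.sum_range_succ', ih, add_comm]
  simp only [vtSum, hsum, List.length_cons, Finset.sum_range_succ', List.getD_cons_succ,
    List.getD_cons_zero, add_one_mul _ (c.getD _ 0), Finset.sum_add_distrib]
  ring

lemma vtSum_append (A B : List ℕ) :
    vtSum (A ++ B) = vtSum A + vtSum B + A.length * B.sum := by
  induction A with
  | nil => simp [vtSum]
  | cons a A ih =>
    simp only [List.cons_append, vtSum_cons, ih, List.sum_append, List.length_cons]
    ring

lemma eq_one_of_sum_eq_length {D : List ℕ} (hD : ∀ d ∈ D, d ≤ 1) (h : D.sum = D.length) :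
    ∀ d ∈ D, d = 1 := by
  induction D with
  | nil => simp
  | cons d D ih =>
    obtain ⟨hd, hD⟩ := List.forall_mem_cons.1 hD
    have hle : D.sum ≤ D.length := by simpa using D.sum_le_card_nsmul 1 hD
    rw [List.sum_cons, List.length_cons] at h
    exact List.forall_mem_cons.2 ⟨by omega, ih hD (by omega)⟩

/-- The weights differ by `D.sum + (|A| + 1) b - (|A| + |D| + 1) b'`, whose two parts are below `m`;
it vanishes only if `D` is constantly `b = b'`. -/
lemma eq_of_vtSum_modEq_of_aligned {A D C : List ℕ} {b b' m : ℕ} (hD : ∀ d ∈ D, d ≤ 1)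
    (hb : b ≤ 1) (hb' : b' ≤ 1) (hm : (A ++ b :: (D ++ C)).length < m)
    (h : vtSum (A ++ b :: (D ++ C)) ≡ vtSum (A ++ (D ++ b' :: C)) [MOD m]) :
    A ++ b :: (D ++ C) = A ++ (D ++ b' :: C) := by
  have hle : D.sum ≤ D.length := by simpa using D.sum_le_card_nsmul 1 hD
  simp only [List.length_append, List.length_cons] at hm
  have hmod : D.sum + (A.length + 1) * b ≡ (A.length + D.length + 1) * b' [MOD m] := by
    simp only [vtSum_append, vtSum_cons, List.sum_append, List.sum_cons] at h
    refine Nat.ModEq.add_right_cancel' (vtSum A + vtSum D + vtSum C + D.length * C.sum + C.sum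
      + A.length * (D.sum + C.sum)) ?_
    convert h using 1 <;> ring
  have hlt : D.sum + (A.length + 1) * b < m := by
    have := Nat.mul_le_mul_left (A.length + 1) hb
    omega
  have hlt' : (A.length + D.length + 1) * b' < m := by
    have := Nat.mul_le_mul_left (A.length + D.length + 1) hb'
    omega
  have heq := hmod.eq_of_lt_of_lt hlt hlt'
  obtain ⟨rfl, hconst⟩ : b = b' ∧ ∀ d ∈ D, d = b := by
    interval_cases b <;> interval_cases b'
    · exact ⟨rfl, List.sum_eq_zero_iff.1 (by omega)⟩
    · omega
    · omega
    · exact ⟨rfl, eq_one_of_sum_eq_length hD (by omega)⟩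
  rw [cons_append_comm_of_forall_eq hconst]

/-- The binary Varshamov–Tenengolts theorem. -/
theorem eq_of_mem_burst_one_of_vtSum_modEq {c c' w : List ℕ} {m : ℕ} (hc : w ∈ burst 1 c)
    (hc' : w ∈ burst 1 c') (hbin : ∀ b ∈ c, b ≤ 1) (hbin' : ∀ b ∈ c', b ≤ 1) (hm : c.length < m)
    (h : vtSum c ≡ vtSum c' [MOD m]) : c = c' := by
  have hm' : c'.length < m := by rwa [← length_add_of_mem_burst hc', length_add_of_mem_burst hc]
  obtain ⟨A, D, C, b, b', ⟨rfl, rfl⟩ | ⟨rfl, rfl⟩⟩ := exists_aligned_insertions hc hc'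
  · exact eq_of_vtSum_modEq_of_aligned (fun d hd => hbin d (by simp [hd])) (hbin b (by simp))
      (hbin' b' (by simp)) hm h
  · exact (eq_of_vtSum_modEq_of_aligned (fun d hd => hbin' d (by simp [hd]))
      (hbin' b' (by simp)) (hbin b (by simp)) hm' h.symm).symm

lemma phiTail_cons_cons (a b : ℕ) (u : List ℕ) :
    phiTail (a :: b :: u) = (if a ≤ b then 1 else 0) :: phiTail (b :: u) := rfl

lemma length_phiTail (u : List ℕ) : (phiTail u).length = u.length - 1 := by
  simp [phiTail]

lemma phiTail_drop (k : ℕ) (u : List ℕ) : phiTail (u.drop k) = (phiTail u).drop k := by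
  rw [phiTail, phiTail, List.drop_zipWith, List.tail_drop, List.drop_tail]

lemma phiTail_append_left_cancel {A L L' : List ℕ} (h : phiTail (A ++ L) = phiTail (A ++ L')) :
    phiTail L = phiTail L' := by
  simpa [← phiTail_drop] using congrArg (List.drop A.length) h

lemma phiTail_append_cons (A : List ℕ) (x : ℕ) (B : List ℕ) :
    phiTail (A ++ x :: B) = phiTail (A ++ [x]) ++ phiTail (x :: B) := by
  induction A with
  | nil => rfl
  | cons a A ih => cases A <;> simp_all [phiTail_cons_cons]

lemma le_one_of_mem_phiTail {u : List ℕ} {d : ℕ} (hd : d ∈ phiTail u) : d ≤ 1 := by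
  simp only [phiTail, List.mem_iff_getElem, List.getElem_zipWith] at hd
  obtain ⟨i, -, rfl⟩ := hd
  split_ifs <;> simp

lemma phiTail_mem_burst_one {u w : List ℕ} (h : w ∈ burst 1 u) (hw : w ≠ []) :
    phiTail w ∈ burst 1 (phiTail u) := by
  obtain ⟨A, a, C, rfl, rfl⟩ := mem_burst_one_iff.1 h
  rw [mem_burst_one_iff]
  obtain rfl | ⟨A, x, rfl⟩ := A.eq_nil_or_concat' <;> rcases C with - | ⟨c, C⟩
  · exact absurd rfl hw
  · exact ⟨[], _, phiTail (c :: C), phiTail_cons_cons a c C, rfl⟩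
  · refine ⟨phiTail (A ++ [x]), if x ≤ a then 1 else 0, [], ?_, by simp⟩
    rw [List.append_assoc, List.singleton_append, phiTail_append_cons]
    rfl
  · simp only [List.append_assoc, List.singleton_append, phiTail_append_cons A x (a :: _),
      phiTail_append_cons A x (c :: _), phiTail_cons_cons]
    have hbit : (if x ≤ c then 1 else 0) = (if x ≤ a then 1 else 0) ∨
        (if x ≤ c then 1 else 0) = (if a ≤ c then 1 else 0) := by
      split_ifs <;> omega
    obtain hxa | hac := hbit
    · exact ⟨phiTail (A ++ [x]) ++ [if x ≤ a then 1 else 0], if a ≤ c then 1 else 0,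
        phiTail (c :: C), by simp, by simp [hxa]⟩
    · exact ⟨phiTail (A ++ [x]), _, _ :: phiTail (c :: C), rfl, by rw [hac]⟩

lemma phiTail_eq_of_mem_burst_one {u u' w : List ℕ} (hu : w ∈ burst 1 u) (hu' : w ∈ burst 1 u')
    (h : vtSum (phiTail u) ≡ vtSum (phiTail u') [MOD u.length]) : phiTail u = phiTail u' := by
  have hlen := length_add_of_mem_burst hu
  have hlen' := length_add_of_mem_burst hu'
  by_cases hw : w = []
  · subst hw
    have hnil : phiTail u = [] := List.length_eq_zero_iff.1 (by simp [length_phiTail, ← hlen])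
    have hnil' : phiTail u' = [] := List.length_eq_zero_iff.1 (by simp [length_phiTail, ← hlen'])
    rw [hnil, hnil']
  · exact eq_of_mem_burst_one_of_vtSum_modEq (phiTail_mem_burst_one hu hw)
      (phiTail_mem_burst_one hu' hw) (fun _ => le_one_of_mem_phiTail)
      (fun _ => le_one_of_mem_phiTail) (by rw [length_phiTail]; omega) h

lemma isChain_le_or_isChain_gt_of_phiTail_eq {a : ℕ} {C : List ℕ} (D : List ℕ) (e d : ℕ)
    (h : phiTail (e :: d :: (D ++ C)) = phiTail (d :: (D ++ a :: C))) :
    List.IsChain (· ≤ ·) (e :: d :: (D ++ [a])) ∨ List.IsChain (· > ·) (e :: d :: (D ++ [a])) := by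
  induction D generalizing e d with
  | nil =>
    rw [List.nil_append, List.nil_append, phiTail_cons_cons, phiTail_cons_cons] at h
    obtain ⟨hbit, -⟩ := List.cons.inj h
    simp only [List.nil_append, List.isChain_cons_cons, List.isChain_singleton, and_true]
    split_ifs at hbit <;> omega
  | cons d' D ih =>
    rw [List.cons_append, List.cons_append, phiTail_cons_cons e,
      phiTail_cons_cons d d' (D ++ a :: C)] at h
    obtain ⟨hbit, htail⟩ := List.cons.inj h
    have hiff : e ≤ d ↔ d ≤ d' := by
      split_ifs at hbit <;> omega
    simp only [List.cons_append, List.isChain_cons_cons (a := e)]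
    rcases ih d d' htail with hle | hgt
    · exact .inl ⟨hiff.2 (List.isChain_cons_cons.1 hle).1, hle⟩
    · exact .inr ⟨not_le.1 (mt hiff.1 (not_le.2 (List.isChain_cons_cons.1 hgt).1)), hgt⟩

lemma forall_mem_eq_of_phiTail_eq {a : ℕ} {D C : List ℕ}
    (h : phiTail (a :: (D ++ C)) = phiTail (D ++ a :: C)) : ∀ d ∈ D, d = a := by
  rcases D with - | ⟨d, D⟩
  · simp
  rcases isChain_le_or_isChain_gt_of_phiTail_eq D a d h with hch | hch
  · have hp := List.isChain_iff_pairwise.1 hch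
    rw [← List.cons_append, List.pairwise_cons, List.pairwise_append] at hp
    exact fun x hx => le_antisymm (hp.2.2.2 x hx a (by simp)) (hp.1 x (List.mem_append_left _ hx))
  · have hp := List.pairwise_cons.1 (List.isChain_iff_pairwise.1 hch)
    exact absurd (hp.1 a (by simp)) (lt_irrefl a)

lemma eq_of_phiTail_eq_of_sum_modEq {q a a' : ℕ} {A D C : List ℕ} (ha : a < q) (ha' : a' < q)
    (hphi : phiTail (A ++ a :: (D ++ C)) = phiTail (A ++ (D ++ a' :: C)))
    (hsum : (A ++ a :: (D ++ C)).sum ≡ (A ++ (D ++ a' :: C)).sum [MOD q]) :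
    A ++ a :: (D ++ C) = A ++ (D ++ a' :: C) := by
  obtain rfl : a = a' := by
    refine Nat.ModEq.eq_of_lt_of_lt (Nat.ModEq.add_left_cancel' (A.sum + D.sum + C.sum) ?_) ha ha'
    simp only [List.sum_append, List.sum_cons] at hsum
    convert hsum using 1 <;> ring
  rw [cons_append_comm_of_forall_eq
    (forall_mem_eq_of_phiTail_eq (phiTail_append_left_cancel hphi))]

/-- Tenengolts' theorem for `q`-ary strings. -/
theorem eq_of_mem_burst_one_of_vtSum_phiTail_of_sum {q : ℕ} {u u' w : List ℕ}
    (hu : w ∈ burst 1 u) (hu' : w ∈ burst 1 u') (hq : ∀ a ∈ u, a < q) (hq' : ∀ a ∈ u', a < q)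
    (hvt : vtSum (phiTail u) % u.length = vtSum (phiTail u') % u'.length)
    (hsum : u.sum % q = u'.sum % q) : u = u' := by
  rw [← length_add_of_mem_burst hu', length_add_of_mem_burst hu] at hvt
  have hphi := phiTail_eq_of_mem_burst_one hu hu' hvt
  obtain ⟨A, D, C, a, a', ⟨rfl, rfl⟩ | ⟨rfl, rfl⟩⟩ := exists_aligned_insertions hu hu'
  · exact eq_of_phiTail_eq_of_sum_modEq (hq a (by simp)) (hq' a' (by simp)) hphi hsum
  · exact (eq_of_phiTail_eq_of_sum_modEq (hq' a' (by simp)) (hq a (by simp)) hphi.symm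
      hsum.symm).symm

lemma exists_add_modEq {t : ℕ} (ht : 0 < t) (a j : ℕ) : ∃ k < t, a + k ≡ j [MOD t] := by
  have : NeZero t := ⟨ht.ne'⟩
  refine ⟨((j : ZMod t) - a).val, ZMod.val_lt _, ?_⟩
  rw [← ZMod.natCast_eq_natCast_iff]
  simp

lemma residSub_congr {t i j : ℕ} (h : i ≡ j [MOD t]) (x : List ℕ) :
    residSub t i x = residSub t j x := by
  rw [residSub, residSub, h]

lemma residSub_nil (t j : ℕ) : residSub t j [] = [] := rfl

lemma residSub_append (t j : ℕ) (A B : List ℕ) :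
    residSub t (A.length + j) (A ++ B) = residSub t (A.length + j) A ++ residSub t j B := by
  have hshift (i : ℕ) : (A.length + i + 1) % t = (A.length + j) % t ↔ (i + 1) % t = j % t :=
    ⟨fun h => Nat.ModEq.add_left_cancel' A.length h, fun h => Nat.ModEq.add_left A.length h⟩
  rw [residSub, List.length_append, List.range_add, List.filter_append, List.map_append]
  congr 1
  · refine List.map_congr_left fun i hi => List.getD_append _ _ _ _ ?_
    exact List.mem_range.1 (List.mem_of_mem_filter hi)
  · simp +contextual [residSub, List.filter_map, Function.comp_def, beq_eq_decide, hshift,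
      List.getElem?_append_right]

lemma residSub_cons (t j a : ℕ) (x : List ℕ) :
    residSub t (1 + j) (a :: x) = (if t ∣ j then [a] else []) ++ residSub t j x := by
  have hdvd : 1 % t = (1 + j) % t ↔ t ∣ j := by
    rw [← Nat.ModEq, Nat.modEq_iff_dvd' (Nat.le_add_right 1 j), Nat.add_sub_cancel_left]
  rw [← List.singleton_append]
  refine (residSub_append t j [a] x).trans ?_
  congr 1
  split_ifs with h <;> simp [residSub, hdvd, h]

lemma mem_of_mem_residSub {t j a : ℕ} {x : List ℕ} (h : a ∈ residSub t j x) : a ∈ x := by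
  obtain ⟨i, hi, rfl⟩ := List.mem_map.1 h
  rw [List.getD_eq_getElem _ _ (List.mem_range.1 (List.mem_of_mem_filter hi))]
  exact List.getElem_mem _

lemma length_residSub_succ (t j : ℕ) (x : List ℕ) :
    (residSub t (j + 1) x).length = Nat.count (· ≡ j [MOD t]) x.length := by
  rw [residSub, List.length_map, ← List.countP_eq_length_filter, Nat.count]
  refine List.countP_congr fun i _ => ?_
  rw [beq_iff_eq, decide_eq_true_iff]
  exact ⟨fun h => Nat.ModEq.add_right_cancel' 1 h, fun h => Nat.ModEq.add_right 1 h⟩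

lemma residSub_mem_burst_one {t : ℕ} (ht : 0 < t) (j : ℕ) {x y : List ℕ} (h : y ∈ burst t x) :
    residSub t j y ∈ burst 1 (residSub t j x) := by
  obtain ⟨A, T, C, hT, rfl, rfl⟩ := mem_burst_iff.1 h
  obtain ⟨k, -, hk⟩ := exists_add_modEq ht (A.length + 1) j
  have hperiod : k + 1 ≡ T.length + (k + 1) [MOD t] := by simp [hT, Nat.ModEq]
  have hwindow : (residSub t (k + 1) T).length = 1 := by
    rw [length_residSub_succ, hT, Nat.count_modEq_card t ht, Nat.div_self ht]
    simp
  rw [add_assoc, add_comm 1] at hk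
  rw [← residSub_congr hk, ← residSub_congr hk, residSub_append, residSub_append, mem_burst_iff]
  refine ⟨_, _, residSub t (k + 1) C, hwindow, ?_, rfl⟩
  rw [residSub_congr hperiod (T ++ C), residSub_append, residSub_congr hperiod T]

lemma eq_of_forall_residSub_eq {t : ℕ} {x x' : List ℕ}
    (h : ∀ j, residSub t j x = residSub t j x') : x = x' := by
  have hhead (a : ℕ) (x : List ℕ) : residSub t 1 (a :: x) = a :: residSub t 0 x := by
    simpa using residSub_cons t 0 a x
  induction x generalizing x' with
  | nil =>
    rcases x' with - | ⟨a', x'⟩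
    · rfl
    · simpa [hhead, residSub_nil] using h 1
  | cons a x ih =>
    rcases x' with - | ⟨a', x'⟩
    · simpa [hhead, residSub_nil] using h 1
    · have hcons : a :: residSub t 0 x = a' :: residSub t 0 x' := by
        simpa only [hhead] using h 1
      obtain rfl : a = a' := (List.cons.inj hcons).1
      rw [ih fun j => by simpa [residSub_cons] using h (1 + j)]

theorem combined_syndrome_separates_general
    {q t : ℕ} {x x' : List ℕ} (hlen : x.length = x'.length)
    (ha : ∀ a ∈ x, a < q) (ha' : ∀ a ∈ x', a < q) (hne : x ≠ x')
    (hball : (burstLe t x ∩ burstLe t x').Nonempty) :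
    ∃ t', 1 ≤ t' ∧ t' ≤ t ∧ ∃ j, 1 ≤ j ∧ j ≤ t' ∧
      ¬(vtSum (phiTail (residSub t' j x)) % (residSub t' j x).length =
          vtSum (phiTail (residSub t' j x')) % (residSub t' j x').length ∧
        (residSub t' j x).sum % q = (residSub t' j x').sum % q) := by
  obtain ⟨s, hst, y, hy, hy'⟩ := exists_burst_inter_nonempty hlen hball
  have hs : 0 < s := by
    refine Nat.pos_of_ne_zero ?_
    rintro rfl
    exact hne ((eq_of_mem_burst_zero hy).symm.trans (eq_of_mem_burst_zero hy'))
  by_contra! hsyn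
  refine hne (eq_of_forall_residSub_eq (t := s) fun j => ?_)
  obtain ⟨k, hk, hkj⟩ := exists_add_modEq hs 1 j
  obtain ⟨hvt, hsum⟩ := hsyn s hs hst (1 + k) (by omega) (by omega)
  rw [← residSub_congr hkj, ← residSub_congr hkj]
  exact eq_of_mem_burst_one_of_vtSum_phiTail_of_sum (residSub_mem_burst_one hs _ hy)
    (residSub_mem_burst_one hs _ hy') (fun a h => ha a (mem_of_mem_residSub h))
    (fun a h => ha' a (mem_of_mem_residSub h)) hvt hsum

/-- the combined syndrome
`h̄(x) = (VT(φ(x_{I_{t',j}})_{[2,·]}), Sum(x_{I_{t',j}}))_{1 ≤ j ≤ t' ≤ t}`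
separates distinct strings whose burst-deletion balls of radius `≤ t`
intersect: if `x ≠ x'` and `B_{≤t}(x) ∩ B_{≤t}(x') ≠ ∅`, then some component
of the syndrome differs.  (For a subsequence `u` of length `m`, the VT
syndrome of `φ(u)_{[2,m]}` is taken modulo `m`, since `φ(u)_{[2,m]}` has
length `m-1`.) -/
theorem combined_syndrome_separates
    (q t n : ℕ) (hq : 2 < q) (ht : 1 ≤ t)
    (x x' : List ℕ) (hx : x.length = n) (hx' : x'.length = n)
    (ha : ∀ a ∈ x, a < q) (ha' : ∀ a ∈ x', a < q)
    (hne : x ≠ x')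
    (hball : (burstLe t x ∩ burstLe t x').Nonempty) :
    ∃ t', 1 ≤ t' ∧ t' ≤ t ∧ ∃ j, 1 ≤ j ∧ j ≤ t' ∧
      ¬(vtSum (phiTail (residSub t' j x)) % (residSub t' j x).length =
          vtSum (phiTail (residSub t' j x')) % (residSub t' j x').length ∧
        (residSub t' j x).sum % q = (residSub t' j x').sum % q) := by
  exact combined_syndrome_separates_general (hx.trans hx'.symm) ha ha' hne hball
end

section
/- Fix integers q > 2, t ≥ 1, and a real ε > 0. There exists n_0 such that for every n ≥ n_0 there exist an integer m with m − (n−1) ≤ (log_2 n + (8+ε)·log_2 log_2 n)/log_2 q and an injective map E : Σ_q^{n−1} → Σ_q^m such that the code C = E(Σ_q^{n−1}) ⊆ Σ_q^m corrects any burst of at most t deletions, i.e., for all z, z' ∈ C with B_{≤t}(z) ∩ B_{≤t}(z') ≠ ∅ one has z = z'. In particular, there exist q-ary codes correcting a burst of at most t deletions with redundancy at most log_2 n + 8·log_2 log_2 n + o(log_2 log_2 n) + γ_{q,t} bits, where γ_{q,t} is a constant depending only on q and t. -/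
namespace BurstCode

/-! ### Moved segments -/

/-- The infinite word `z` with the factor of length `s` starting at position `i` deleted. Finite
words are treated as prefixes of infinite ones, which keeps the positions free of bounds. -/
def del {A : Type*} (z : ℕ → A) (i s p : ℕ) : A :=
  if p < i then z p else z (p + s)

/-- The factor of length `B` of the infinite word `z` starting at position `a`. -/
def factor {A : Type*} (B : ℕ) (z : ℕ → A) (a : ℕ) : Fin B → A :=
  fun k => z (a + k)

/-- `f'` arises from `f` by moving the segment `[i + s, j + s)` to the left by `s`, where nothing is
required at the `t` positions before `i` and at the positions from `j - t` to `j + s`. If two words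
are related in this way with `t = 0`, then so are, with margin `t`, the predicates that mark the
occurrences of a pattern of length `t + 1` in them. -/
structure MovesLeft {α : Type*} (f f' : ℕ → α) (t i j s : ℕ) : Prop where
  eq_before : ∀ p, p + t < i → f' p = f p
  eq_shift : ∀ p, i ≤ p → p + t < j → f' p = f (p + s)
  eq_after : ∀ p, j + s ≤ p → f' p = f p

section MovesLeft

variable {α β : Type*} {f f' : ℕ → α} {t i j s : ℕ}

lemma movesLeft_of_del_eq (hij : i ≤ j) (h : del f i s = del f' j s) :
    MovesLeft f f' 0 i j s where
  eq_before p hp := by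
    simpa [del, show p < i by omega, show p < j by omega] using (congrFun h p).symm
  eq_shift p hi hj := by
    simpa [del, show ¬ p < i by omega, show p < j by omega] using (congrFun h p).symm
  eq_after p hp := by
    simpa [del, show ¬ p - s < i by omega, show ¬ p - s < j by omega,
      show p - s + s = p by omega] using (congrFun h (p - s)).symm

lemma MovesLeft.comp (h : MovesLeft f f' t i j s) (g : α → β) :
    MovesLeft (g ∘ f) (g ∘ f') t i j s where
  eq_before p hp := congrArg g (h.eq_before p hp)
  eq_shift p hi hj := congrArg g (h.eq_shift p hi hj)
  eq_after p hp := congrArg g (h.eq_after p hp)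

lemma MovesLeft.factor (h : MovesLeft f f' 0 i j s) (t : ℕ) :
    MovesLeft (factor (t + 1) f) (factor (t + 1) f') t i j s where
  eq_before p hp := funext fun k => h.eq_before _ (by omega)
  eq_shift p hi hj := funext fun k =>
    (h.eq_shift _ (by omega) (by omega)).trans (congrArg f (by omega))
  eq_after p hp := funext fun k => h.eq_after _ (by omega)

end MovesLeft

/-! ### Spaced predicates and their counting functions -/

/-- Any two elements of `P` are more than `t` apart. -/
def Spaced (t : ℕ) (P : ℕ → Prop) : Prop :=
  ∀ a b, P a → P b → a < b → a + t < b

/-- Every interval of length `δ` inside `[0, m)` meets `P`. -/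
def DenseBelow (δ m : ℕ) (P : ℕ → Prop) : Prop :=
  ∀ a, a + δ ≤ m → ∃ p, a ≤ p ∧ p < a + δ ∧ P p

/-- The excess of `P'` over `P` in `[0, x)`. -/
def discrepancy (P P' : ℕ → Prop) [DecidablePred P] [DecidablePred P'] (x : ℕ) : ℤ :=
  Nat.count P' x - Nat.count P x

section Counting

variable {P P' : ℕ → Prop} [DecidablePred P] [DecidablePred P'] {t i j s m δ : ℕ}

lemma count_add_count_of_shift {a b n : ℕ} (h : ∀ k < n, P' (a + k) = P (b + k)) :
    Nat.count P' (a + n) + Nat.count P b = Nat.count P' a + Nat.count P (b + n) := by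
  induction n with
  | zero => simp
  | succ n ih =>
    have hn := ih fun k hk => h k (by omega)
    simp only [← Nat.add_assoc, Nat.count_succ, h n (by omega)]
    omega

lemma Spaced.count_add_le (hP : Spaced t P) (a : ℕ) :
    Nat.count P (a + (t + 1)) ≤ Nat.count P a + 1 := by
  rw [Nat.count_add, Nat.count_eq_card_filter_range _ (t + 1)]
  refine Nat.add_le_add_left (Finset.card_le_one.2 fun p hp p' hp' => ?_) _
  simp only [Finset.mem_filter, Finset.mem_range] at hp hp'
  by_contra hne
  rcases Nat.lt_or_gt_of_ne hne with hlt | hlt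
  · have := hP _ _ hp.2 hp'.2 (by omega)
    omega
  · have := hP _ _ hp'.2 hp.2 (by omega)
    omega

lemma Spaced.count_le {a b c : ℕ} (hP : Spaced t P) (hb : b ≤ a + c * (t + 1)) :
    Nat.count P b ≤ Nat.count P a + c := by
  induction c generalizing b with
  | zero => exact Nat.count_monotone P (by simpa using hb)
  | succ c ih =>
    rw [Nat.add_one_mul] at hb
    have hstep := Nat.count_monotone P (show b ≤ b - (t + 1) + (t + 1) by omega)
    have hlast := hP.count_add_le (b - (t + 1))
    have hprev := ih (b := b - (t + 1)) (by omega)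
    omega

lemma DenseBelow.count_ge {a b c : ℕ} (hP : DenseBelow δ m P) (hab : a + c * δ ≤ b) (hb : b ≤ m) :
    Nat.count P a + c ≤ Nat.count P b := by
  induction c generalizing b with
  | zero => simpa using Nat.count_monotone P (show a ≤ b by omega)
  | succ c ih =>
    rw [Nat.add_one_mul] at hab
    obtain ⟨p, hap, hpb, hp⟩ := hP (b - δ) (by omega)
    have hprev := ih (b := b - δ) (by omega) (by omega)
    have hmono := Nat.count_monotone P hap
    have hlt := Nat.count_strict_mono hp (show p < b by omega)
    omega

lemma MovesLeft.discrepancy_of_le (h : MovesLeft P P' t i j s) {x : ℕ} (hx : x ≤ i - t) :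
    discrepancy P P' x = 0 := by
  have := count_add_count_of_shift (P := P) (P' := P') (a := 0) (b := 0) (n := x)
    fun k hk => h.eq_before _ (by omega)
  simp only [Nat.count_zero, zero_add] at this
  simp only [discrepancy]
  omega

lemma MovesLeft.discrepancy_of_mem_Icc (h : MovesLeft P P' t i j s) {x : ℕ} (hi : i ≤ x)
    (hj : x + t ≤ j) :
    discrepancy P P' x = (Nat.count P' i - Nat.count P (i + s) : ℤ)
      + (Nat.count P (x + s) - Nat.count P x) := by
  obtain ⟨n, rfl⟩ := Nat.exists_eq_add_of_le hi
  have := count_add_count_of_shift (P := P) (P' := P') (a := i) (b := i + s) (n := n)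
    fun k hk => (h.eq_shift _ (by omega) (by omega)).trans (congrArg P (by omega))
  rw [Nat.add_right_comm i s n] at this
  simp only [discrepancy]
  omega

lemma MovesLeft.discrepancy_of_ge (h : MovesLeft P P' t i j s) {x : ℕ} (hx : j + s ≤ x) :
    discrepancy P P' x = discrepancy P P' (j + s) := by
  obtain ⟨n, rfl⟩ := Nat.exists_eq_add_of_le hx
  have := count_add_count_of_shift (P := P) (P' := P') (a := j + s) (b := j + s) (n := n)
    fun k _ => h.eq_after _ (by omega)
  simp only [discrepancy]
  omega

lemma MovesLeft.abs_discrepancy_le_one (h : MovesLeft P P' t i j s) (hP : Spaced t P)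
    (hP' : Spaced t P') {x : ℕ} (hx : x ≤ i) : |discrepancy P P' x| ≤ 1 := by
  rcases Nat.le_total x (i - t) with hxi | hxi
  · simp [h.discrepancy_of_le hxi]
  have hstart := h.discrepancy_of_le le_rfl
  have hN := Nat.count_monotone P hxi
  have hN' := Nat.count_monotone P' hxi
  have hle := hP.count_le (a := i - t) (b := x) (c := 1) (by omega)
  have hle' := hP'.count_le (a := i - t) (b := x) (c := 1) (by omega)
  simp only [discrepancy] at hstart ⊢
  rw [abs_le]
  omega

lemma MovesLeft.abs_discrepancy_le_two_of_add_le (h : MovesLeft P P' t i j s) (hP : Spaced t P)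
    (hP' : Spaced t P') (hst : s ≤ t) {x : ℕ} (hx : x + t ≤ j) : |discrepancy P P' x| ≤ 2 := by
  rcases Nat.le_total x i with hxi | hxi
  · exact (h.abs_discrepancy_le_one hP hP' hxi).trans (by norm_num)
  have hstart := h.discrepancy_of_le le_rfl
  have hN := Nat.count_monotone P (show i - t ≤ i + s by omega)
  have hN' := Nat.count_monotone P' (show i - t ≤ i by omega)
  have hle := hP.count_le (a := i - t) (b := i + s) (c := 2) (by omega)
  have hle' := hP'.count_le (a := i - t) (b := i) (c := 1) (by omega)
  have hNx := Nat.count_monotone P (show x ≤ x + s by omega)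
  have hlex := hP.count_le (a := x) (b := x + s) (c := 1) (by omega)
  rw [h.discrepancy_of_mem_Icc hxi hx, abs_le]
  simp only [discrepancy] at hstart
  omega

lemma abs_discrepancy_sub_le_two (hP : Spaced t P) (hP' : Spaced t P') (hst : s ≤ t) {x : ℕ}
    (hx : j ≤ x + t) (hxs : x ≤ j + s) :
    |discrepancy P P' x - discrepancy P P' (j + s)| ≤ 2 := by
  have hN := Nat.count_monotone P hxs
  have hN' := Nat.count_monotone P' hxs
  have hle := hP.count_le (a := x) (b := j + s) (c := 2) (by omega)
  have hle' := hP'.count_le (a := x) (b := j + s) (c := 2) (by omega)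
  simp only [discrepancy]
  rw [abs_le]
  omega

lemma MovesLeft.discrepancy_eq_zero_of_five_dvd (h : MovesLeft P P' t i j s) (hP : Spaced t P)
    (hP' : Spaced t P') (hst : s ≤ t) (htj : t ≤ j) (hjm : j + s ≤ m)
    (hdvd : 5 ∣ discrepancy P P' m) : discrepancy P P' m = 0 := by
  have hmid := h.abs_discrepancy_le_two_of_add_le hP hP' hst (x := j - t) (by omega)
  have hend := abs_discrepancy_sub_le_two hP hP' hst (j := j) (x := j - t) (by omega) (by omega)
  rw [← h.discrepancy_of_ge hjm] at hend
  rw [abs_le] at hmid hend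
  omega

lemma MovesLeft.abs_discrepancy_le_two (h : MovesLeft P P' t i j s) (hP : Spaced t P)
    (hP' : Spaced t P') (hst : s ≤ t) (hjm : j + s ≤ m) (hm : discrepancy P P' m = 0) (x : ℕ) :
    |discrepancy P P' x| ≤ 2 := by
  rw [h.discrepancy_of_ge hjm] at hm
  rcases Nat.le_total (x + t) j with hxj | hxj
  · exact h.abs_discrepancy_le_two_of_add_le hP hP' hst hxj
  rcases Nat.le_total x (j + s) with hxs | hxs
  · simpa [hm] using abs_discrepancy_sub_le_two hP hP' hst hxj hxs
  · simp [h.discrepancy_of_ge hxs, hm]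

lemma MovesLeft.sum_discrepancy_eq_zero_of_dvd (h : MovesLeft P P' t i j s) (hP : Spaced t P)
    (hP' : Spaced t P') (hst : s ≤ t) (hjm : j + s ≤ m) (hm : discrepancy P P' m = 0)
    (hdvd : (2 * m + 1 : ℤ) ∣ ∑ x ∈ Finset.range m, discrepancy P P' x) :
    ∑ x ∈ Finset.range m, discrepancy P P' x = 0 := by
  refine Int.eq_zero_of_abs_lt_dvd hdvd ?_
  calc |∑ x ∈ Finset.range m, discrepancy P P' x|
      ≤ ∑ x ∈ Finset.range m, |discrepancy P P' x| := Finset.abs_sum_le_sum_abs _ _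
    _ ≤ (Finset.range m).card • (2 : ℤ) :=
        Finset.sum_le_card_nsmul _ _ _ fun x _ => h.abs_discrepancy_le_two hP hP' hst hjm hm x
    _ < 2 * m + 1 := by simp; omega

lemma MovesLeft.abs_sum_discrepancy_Ico_le (h : MovesLeft P P' t i j s) (hP : Spaced t P)
    (hP' : Spaced t P') (hst : s ≤ t) (hij : i + t ≤ j) (hjm : j + s ≤ m)
    (hm : discrepancy P P' m = 0) (hsum : ∑ x ∈ Finset.range m, discrepancy P P' x = 0) :
    |∑ x ∈ Finset.Ico i (j - t), discrepancy P P' x| ≤ 5 * t := by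
  have hbefore : ∑ x ∈ Finset.Ico 0 (i - t), discrepancy P P' x = 0 :=
    Finset.sum_eq_zero fun x hx => h.discrepancy_of_le (Finset.mem_Ico.1 hx).2.le
  have hafter : ∑ x ∈ Finset.Ico (j + s) m, discrepancy P P' x = 0 :=
    Finset.sum_eq_zero fun x hx => by
      rw [h.discrepancy_of_ge (Finset.mem_Ico.1 hx).1, ← h.discrepancy_of_ge hjm, hm]
  have hleft : |∑ x ∈ Finset.Ico (i - t) i, discrepancy P P' x| ≤ t :=
    calc _ ≤ _ := Finset.abs_sum_le_sum_abs _ _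
      _ ≤ (Finset.Ico (i - t) i).card • (1 : ℤ) := Finset.sum_le_card_nsmul _ _ _ fun x hx =>
          h.abs_discrepancy_le_one hP hP' (Finset.mem_Ico.1 hx).2.le
      _ ≤ t := by simp; omega
  have hright : |∑ x ∈ Finset.Ico (j - t) (j + s), discrepancy P P' x| ≤ 4 * t :=
    calc _ ≤ _ := Finset.abs_sum_le_sum_abs _ _
      _ ≤ (Finset.Ico (j - t) (j + s)).card • (2 : ℤ) :=
          Finset.sum_le_card_nsmul _ _ _ fun x _ => h.abs_discrepancy_le_two hP hP' hst hjm hm x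
      _ ≤ 4 * t := by simp; omega
  rw [Finset.range_eq_Ico, ← Finset.sum_Ico_consecutive _ (Nat.zero_le (i - t)) (by omega),
    ← Finset.sum_Ico_consecutive _ (Nat.sub_le i t) (by omega),
    ← Finset.sum_Ico_consecutive _ (show i ≤ j - t by omega) (by omega),
    ← Finset.sum_Ico_consecutive _ (show j - t ≤ j + s by omega) hjm, hbefore, hafter] at hsum
  rw [abs_le] at *
  omega

lemma count_sub_count_le_sum {a b : ℕ} (hab : a ≤ b) {g : ℕ → ℤ}
    (hg : ∀ x ∈ Finset.Ico a b, (Nat.count P (x + 1) - Nat.count P x : ℤ) ≤ g x) :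
    (Nat.count P b - Nat.count P a : ℤ) ≤ ∑ x ∈ Finset.Ico a b, g x := by
  rw [← Finset.sum_Ico_sub (fun x => (Nat.count P x : ℤ)) hab]
  exact Finset.sum_le_sum hg

/-- In the moved segment the discrepancy at `x` is `c + w` with a constant `c` and
`w ∈ {0, 1}` the number of elements of `P` in `[x, x + s)`. So it has constant sign, and every
element of `P` makes it nonzero either at the element itself (`0 ≤ c`) or just behind it, where
`w = 0` (`c < 0`). -/
lemma MovesLeft.count_sub_count_le_abs_sum (h : MovesLeft P P' t i j s) (hP : Spaced t P)
    (hs : 1 ≤ s) (hst : s ≤ t) (hij : i + t < j) :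
    (Nat.count P (j - t - 1) - Nat.count P i : ℤ)
      ≤ |∑ x ∈ Finset.Ico i (j - t), discrepancy P P' x| := by
  have hdisc : ∀ x ∈ Finset.Ico i (j - t), discrepancy P P' x =
      (Nat.count P' i - Nat.count P (i + s) : ℤ) + (Nat.count P (x + s) - Nat.count P x) :=
    fun x hx => by
      rw [Finset.mem_Ico] at hx
      exact h.discrepancy_of_mem_Icc hx.1 (by omega)
  rcases Nat.lt_or_ge (Nat.count P' i) (Nat.count P (i + s)) with hc | hc
  · have hincr : ∀ x ∈ Finset.Ico i (j - t - 1),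
        (Nat.count P (x + 1) - Nat.count P x : ℤ) ≤ -discrepancy P P' (x + 1) := fun x hx => by
      have hle := hP.count_le (a := x) (b := x + 1 + s) (c := 1) (by omega)
      rw [Finset.mem_Ico] at hx
      rw [hdisc _ (Finset.mem_Ico.2 (by omega))]
      omega
    have hfirst : discrepancy P P' i ≤ 0 := by
      have hle := hP.count_le (a := i) (b := i + s) (c := 1) (by omega)
      rw [hdisc i (Finset.mem_Ico.2 (by omega))]
      omega
    calc (Nat.count P (j - t - 1) - Nat.count P i : ℤ)
        ≤ ∑ x ∈ Finset.Ico i (j - t - 1), -discrepancy P P' (x + 1) :=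
          count_sub_count_le_sum (by omega) hincr
      _ = -∑ x ∈ Finset.Ico (i + 1) (j - t), discrepancy P P' x := by
          rw [Finset.sum_neg_distrib, Finset.sum_Ico_add' (discrepancy P P'),
            Nat.sub_add_cancel (by omega)]
      _ ≤ -∑ x ∈ Finset.Ico i (j - t), discrepancy P P' x := by
          rw [Finset.sum_eq_sum_Ico_succ_bot (show i < j - t by omega)]
          omega
      _ ≤ _ := neg_le_abs _
  · have hincr : ∀ x ∈ Finset.Ico i (j - t),
        (Nat.count P (x + 1) - Nat.count P x : ℤ) ≤ discrepancy P P' x := fun x hx => by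
      have := Nat.count_monotone P (show x + 1 ≤ x + s by omega)
      rw [hdisc x hx]
      omega
    have := Nat.count_monotone P (show j - t - 1 ≤ j - t by omega)
    calc (Nat.count P (j - t - 1) - Nat.count P i : ℤ)
        ≤ Nat.count P (j - t) - Nat.count P i := by omega
      _ ≤ ∑ x ∈ Finset.Ico i (j - t), discrepancy P P' x :=
          count_sub_count_le_sum (by omega) hincr
      _ ≤ _ := le_abs_self _

/-- A bound for the length `j + s - i` of the window in which two words with a common burst result
can differ, if they have equal invariants and their patterns are `δ`-dense. -/
def windowBound (t δ : ℕ) : ℕ :=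
  (5 * t + 1) * δ + 2 * t

lemma MovesLeft.add_le_add_windowBound (h : MovesLeft P P' t i j s) (hP : Spaced t P)
    (hP' : Spaced t P') (hdense : DenseBelow δ m P) (hs : 1 ≤ s) (hst : s ≤ t) (hjm : j + s ≤ m)
    (hdvd : 5 ∣ discrepancy P P' m)
    (hdvd_sum : (2 * m + 1 : ℤ) ∣ ∑ x ∈ Finset.range m, discrepancy P P' x) :
    j + s ≤ i + windowBound t δ := by
  by_contra! hlong
  rw [windowBound] at hlong
  have hm := h.discrepancy_eq_zero_of_five_dvd hP hP' hst (by omega) hjm hdvd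
  have hsum := h.sum_discrepancy_eq_zero_of_dvd hP hP' hst hjm hm hdvd_sum
  have hmany := hdense.count_ge (a := i) (b := j - t - 1) (c := 5 * t + 1) (by omega) (by omega)
  have hfew := h.count_sub_count_le_abs_sum hP hs hst (by omega)
  have hsmall := h.abs_sum_discrepancy_Ico_le hP hP' hst (by omega) hjm hm hsum
  omega

end Counting

/-! ### Unbordered patterns -/

/-- No proper nonempty suffix of `u` is a prefix of `u`, so occurrences of `u` do not overlap. -/
def Unbordered {A : Type*} {ℓ : ℕ} (u : Fin ℓ → A) : Prop :=
  ∀ d, 0 < d → d < ℓ → ∃ k, ∃ hk : k + d < ℓ, u ⟨k + d, hk⟩ ≠ u ⟨k, by omega⟩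

section Unbordered

variable {A : Type*} {t : ℕ} {u : Fin (t + 1) → A}

lemma unbordered_cons {o e : A} (hoe : o ≠ e) :
    Unbordered (Fin.cons e fun _ : Fin t => o) := fun d hd hdt => by
  have hsucc : (⟨0 + d, by omega⟩ : Fin (t + 1)) = Fin.succ ⟨d - 1, by omega⟩ := by
    ext
    simp only [Fin.val_succ]
    omega
  exact ⟨0, by omega, by rw [hsucc, Fin.cons_succ]; exact hoe⟩

lemma Unbordered.spaced (hu : Unbordered u) (z : ℕ → A) :
    Spaced t fun p => factor (t + 1) z p = u := fun p p' hp hp' hlt => by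
  by_contra! hle
  obtain ⟨k, hk, hne⟩ := hu (p' - p) (by omega) (by omega)
  refine hne ?_
  rw [← congrFun hp ⟨k + (p' - p), hk⟩, ← congrFun hp' ⟨k, by omega⟩]
  exact congrArg z (by simp only; omega)

/-- The number of occurrences of `u` that start in `[0, x)`. -/
def occurrences [DecidableEq A] (u : Fin (t + 1) → A) (z : ℕ → A) (x : ℕ) : ℕ :=
  Nat.count (fun p => factor (t + 1) z p = u) x

lemma Unbordered.add_le_add_windowBound [DecidableEq A] (hu : Unbordered u) {z z' : ℕ → A}
    {i j s m δ : ℕ} (hs : 1 ≤ s) (hst : s ≤ t) (hij : i ≤ j) (hjm : j + s ≤ m)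
    (hdel : del z i s = del z' j s) (hdense : DenseBelow δ m fun p => factor (t + 1) z p = u)
    (hcount : (occurrences u z m : ZMod 5) = occurrences u z' m)
    (hsum : ((∑ x ∈ Finset.range m, occurrences u z x : ℕ) : ZMod (2 * m + 1))
      = (∑ x ∈ Finset.range m, occurrences u z' x : ℕ)) :
    j + s ≤ i + windowBound t δ := by
  have hmoves := ((movesLeft_of_del_eq hij hdel).factor t).comp (· = u)
  refine hmoves.add_le_add_windowBound (hu.spaced z) (hu.spaced z') hdense hs hst hjm ?_ ?_
  · exact_mod_cast (ZMod.intCast_eq_intCast_iff_dvd_sub _ _ 5).1 (by exact_mod_cast hcount)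
  · rw [← Int.cast_natCast, ← Int.cast_natCast (∑ x ∈ Finset.range m, occurrences u z' x),
      ZMod.intCast_eq_intCast_iff_dvd_sub] at hsum
    simpa [discrepancy, occurrences, Function.comp_def] using hsum

end Unbordered

/-! ### Colouring blocks -/

lemma colorable_of_ncard_neighborSet_le {V : Type*} [Finite V] {G : SimpleGraph V} {d : ℕ}
    (hd : ∀ v, (G.neighborSet v).ncard ≤ d) : G.Colorable (d + 1) := by
  classical
  suffices h : ∀ T : Set V, T.Finite →
      ∃ f : V → Fin (d + 1), ∀ v ∈ T, ∀ w ∈ T, G.Adj v w → f v ≠ f w by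
    obtain ⟨f, hf⟩ := h Set.univ Set.finite_univ
    exact ⟨SimpleGraph.Coloring.mk f fun {v w} => hf v trivial w trivial⟩
  intro T hT
  induction T, hT using Set.Finite.induction_on with
  | empty => exact ⟨fun _ => 0, by simp⟩
  | @insert x T hx _ ih =>
    obtain ⟨f, hf⟩ := ih
    obtain ⟨c, -, hc⟩ : ∃ c ∈ Set.univ, c ∉ f '' G.neighborSet x := by
      refine Set.exists_mem_notMem_of_ncard_lt_ncard ?_
      rw [Set.ncard_univ, Nat.card_fin]
      exact Nat.lt_succ_of_le ((Set.ncard_image_le (Set.toFinite _)).trans (hd x))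
    have hfree : ∀ w, G.Adj x w → f w ≠ c := fun w hw h => hc ⟨w, hw, h⟩
    have hne : ∀ v ∈ T, v ≠ x := fun v hv h => hx (h ▸ hv)
    refine ⟨Function.update f x c, ?_⟩
    rintro v (rfl | hv) w (rfl | hw) hadj
    · exact absurd rfl hadj.ne
    · simpa [hne w hw] using (hfree w hadj).symm
    · simpa [hne v hv] using hfree v hadj.symm
    · simpa [hne v hv, hne w hw] using hf v hv w hw hadj

/-- Two blocks are adjacent if the deletion of one burst of equal length at most `t` in each of
them, as prefixes of suitable infinite words, can give the same result. -/
def confusionGraph (A : Type*) (t B : ℕ) : SimpleGraph (Fin B → A) where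
  Adj c c' := c ≠ c' ∧ ∃ s ≤ t, ∃ i j, i + s ≤ B ∧ j + s ≤ B ∧ ∃ z z' : ℕ → A,
    factor B z 0 = c ∧ factor B z' 0 = c' ∧ del z i s = del z' j s
  symm := ⟨by
    rintro c c' ⟨hne, s, hst, i, j, hi, hj, z, z', hz, hz', h⟩
    exact ⟨hne.symm, s, hst, j, i, hj, hi, z', z, hz', hz, h.symm⟩⟩
  loopless := ⟨fun _ h => h.1 rfl⟩

/-- The infinite word `z` with the first `s` letters of `v` inserted at position `j`. -/
def ins {A : Type*} (z v : ℕ → A) (j s p : ℕ) : A :=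
  if p < j then z p else if p < j + s then v (p - j) else z (p - s)

/-- The finite word `w` continued by the letter `o`. -/
def pad {A : Type*} (o : A) {m : ℕ} (w : Fin m → A) (p : ℕ) : A :=
  if h : p < m then w ⟨p, h⟩ else o

/-- A number of colours that suffices for `confusionGraph A t B` if `A` has `Q` letters. -/
def numColours (t B Q : ℕ) : ℕ :=
  (t + 1) * ((B + 1) * ((B + 1) * Q ^ t)) + 1

section Colouring

variable {A : Type*} {t B : ℕ}

lemma pad_apply {o : A} {m : ℕ} {w : Fin m → A} {p : ℕ} (hp : p < m) : pad o w p = w ⟨p, hp⟩ :=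
  dif_pos hp

lemma factor_pad (o : A) {m : ℕ} (w : Fin m → A) : factor m (pad o w) 0 = w :=
  funext fun k => by simp [factor, pad_apply]

/-- A neighbour of `c` is determined by the length and the positions of the bursts and by the
letters that the second burst removes. -/
lemma neighborSet_confusionGraph_subset (o : A) (c : Fin B → A) :
    (confusionGraph A t B).neighborSet c ⊆
      Set.range fun x : Fin (t + 1) × Fin (B + 1) × Fin (B + 1) × (Fin t → A) =>
        factor B (ins (del (pad o c) x.2.1 x.1) (pad o x.2.2.2) x.2.2.1 x.1) 0 := by
  rintro _ ⟨-, s, hst, i, j, hi, hj, z, z', rfl, rfl, h⟩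
  refine ⟨(⟨s, by omega⟩, ⟨i, by omega⟩, ⟨j, by omega⟩, fun k => z' (j + k)),
    funext fun k => ?_⟩
  have hdel : ∀ p, p + s < B → del (pad o (factor B z 0)) i s p = del z' j s p := fun p hp => by
    rw [← congrFun h p]
    simp [del, pad, factor, hp, show p < B by omega]
  simp only [factor, ins, zero_add]
  split_ifs with hkj hkjs
  · rw [hdel _ (by omega), del, if_pos hkj]
  · rw [pad_apply (by omega)]
    exact congrArg z' (by simp only; omega)
  · rw [hdel _ (by omega), del, if_neg (by omega), Nat.sub_add_cancel (by omega)]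

lemma confusionGraph_colorable [Finite A] [Nonempty A] :
    (confusionGraph A t B).Colorable (numColours t B (Nat.card A)) := by
  obtain ⟨o⟩ := ‹Nonempty A›
  refine colorable_of_ncard_neighborSet_le fun c => ?_
  refine (Set.ncard_le_ncard (neighborSet_confusionGraph_subset o c)).trans ?_
  rw [← Set.image_univ]
  refine (Set.ncard_image_le).trans ?_
  simp [Set.ncard_univ, Nat.card_prod, Nat.card_fun]

/-- The sum of the colours of the first `m` blocks of length `B` from position `a` on. -/
def colourSum {K : ℕ} (col : (Fin B → A) → Fin K) (m a : ℕ) (z : ℕ → A) : ℕ :=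
  ∑ b ∈ Finset.range m, (col (factor B z (a + B * b)) : ℕ)

lemma colour_eq_of_colourSum_modEq {K m a b : ℕ} {col : (Fin B → A) → Fin K} {z z' : ℕ → A}
    (hb : b < m) (h : ∀ p, p < a + B * b ∨ a + B * b + B ≤ p → z p = z' p)
    (hsum : colourSum col m a z ≡ colourSum col m a z' [MOD K]) :
    col (factor B z (a + B * b)) = col (factor B z' (a + B * b)) := by
  have hother : ∀ b' ∈ (Finset.range m).erase b,
      (col (factor B z (a + B * b')) : ℕ) = col (factor B z' (a + B * b')) := fun b' hb' => by
    congr 2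
    funext k
    refine h _ ?_
    rcases Nat.lt_or_gt_of_ne (Finset.ne_of_mem_erase hb') with hlt | hlt
    · have := Nat.mul_le_mul_left B hlt
      rw [Nat.mul_succ] at this
      omega
    · have := Nat.mul_le_mul_left B hlt
      rw [Nat.mul_succ] at this
      omega
  simp only [colourSum] at hsum
  rw [← Finset.add_sum_erase _ _ (Finset.mem_range.2 hb),
    ← Finset.add_sum_erase _ _ (Finset.mem_range.2 hb), Finset.sum_congr rfl hother] at hsum
  exact Fin.ext ((Nat.ModEq.add_right_cancel' _ hsum).eq_of_lt_of_lt (Fin.is_lt _) (Fin.is_lt _))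

lemma factor_eq_of_colour_eq {K a i j s : ℕ} {z z' : ℕ → A}
    (col : (confusionGraph A t B).Coloring (Fin K)) (hst : s ≤ t) (hai : a ≤ i) (haj : a ≤ j)
    (hi : i + s ≤ a + B) (hj : j + s ≤ a + B) (hdel : del z i s = del z' j s)
    (hcol : col (factor B z a) = col (factor B z' a)) : factor B z a = factor B z' a := by
  have hshift (y : ℕ → A) : factor B (fun p => y (a + p)) 0 = factor B y a :=
    funext fun k => by simp [factor]
  by_contra hne
  refine col.valid ⟨hne, s, hst, i - a, j - a, by omega, by omega, _, _, hshift z, hshift z',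
    funext fun p => ?_⟩ hcol
  have := congrFun hdel (a + p)
  simp only [del] at this ⊢
  simpa only [← Nat.add_assoc, Nat.lt_sub_iff_add_lt'] using this

lemma eq_of_colourSum_modEq {K m a b i j s : ℕ} {z z' : ℕ → A}
    (col : (confusionGraph A t B).Coloring (Fin K)) (hst : s ≤ t) (hij : i ≤ j) (hb : b < m)
    (hi : a + B * b ≤ i) (hj : j + s ≤ a + B * b + B) (hdel : del z i s = del z' j s)
    (hsum : colourSum col m a z ≡ colourSum col m a z' [MOD K]) : z = z' := by
  have hmoves := movesLeft_of_del_eq hij hdel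
  have hout : ∀ p, p < a + B * b ∨ a + B * b + B ≤ p → z p = z' p := by
    rintro p (hp | hp)
    · exact (hmoves.eq_before p (by omega)).symm
    · exact (hmoves.eq_after p (by omega)).symm
  have hblock := factor_eq_of_colour_eq col hst hi (by omega) (by omega) hj hdel
    (colour_eq_of_colourSum_modEq hb hout hsum)
  funext p
  by_cases hp : p < a + B * b ∨ a + B * b + B ≤ p
  · exact hout p hp
  · simpa [factor, Nat.add_sub_cancel' (show a + B * b ≤ p by omega)] using
      congrFun hblock ⟨p - (a + B * b), by omega⟩

/-- A window of length at most `W` lies inside a single block of one of the two partitions into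
blocks of length `2 * W` with offsets `0` and `W`. -/
lemma eq_of_colourSum_modEq_of_le {K W m i j s : ℕ} {z z' : ℕ → A}
    (col : (confusionGraph A t (2 * W)).Coloring (Fin K)) (hs : 1 ≤ s) (hst : s ≤ t) (hij : i ≤ j)
    (hjm : j + s ≤ m) (hW : j + s ≤ i + W) (hdel : del z i s = del z' j s)
    (hsum₀ : colourSum col m 0 z ≡ colourSum col m 0 z' [MOD K])
    (hsum₁ : colourSum col m W z ≡ colourSum col m W z' [MOD K]) : z = z' := by
  have hb : i / (2 * W) < m := (Nat.div_le_self _ _).trans_lt (by omega)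
  have hdiv := Nat.div_add_mod i (2 * W)
  have hmod := Nat.mod_lt i (show 0 < 2 * W by omega)
  rcases Nat.lt_or_ge (i % (2 * W)) W with h | h
  · exact eq_of_colourSum_modEq col hst hij hb (by omega) (by omega) hdel hsum₀
  · exact eq_of_colourSum_modEq col hst hij hb (by omega) (by omega) hdel hsum₁

end Colouring

/-! ### The syndrome -/

/-- The invariants whose level sets, restricted to words with dense occurrences of `u`, are codes:
the number of occurrences, the sum of their counting function, and the two colour sums. -/
def syndrome {A : Type*} [DecidableEq A] {t W K : ℕ} (u : Fin (t + 1) → A)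
    (col : (Fin (2 * W) → A) → Fin K) (m : ℕ) (z : ℕ → A) :
    ZMod 5 × ZMod (2 * m + 1) × ZMod K × ZMod K :=
  (occurrences u z m, (∑ x ∈ Finset.range m, occurrences u z x : ℕ),
    colourSum col m 0 z, colourSum col m W z)

section Syndrome

variable {A : Type*} [DecidableEq A] {t δ K m : ℕ} {u : Fin (t + 1) → A} {z z' : ℕ → A}

lemma Unbordered.eq_of_syndrome_eq_of_le (hu : Unbordered u) {i j s : ℕ}
    (col : (confusionGraph A t (2 * windowBound t δ)).Coloring (Fin K))
    (hz : DenseBelow δ m fun p => factor (t + 1) z p = u)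
    (hsyn : syndrome u col m z = syndrome u col m z') (hs : 1 ≤ s) (hst : s ≤ t) (hij : i ≤ j)
    (hjm : j + s ≤ m) (hdel : del z i s = del z' j s) : z = z' := by
  simp only [syndrome, Prod.mk.injEq, ZMod.natCast_eq_natCast_iff] at hsyn
  obtain ⟨hcount, hsum, hcol₀, hcol₁⟩ := hsyn
  refine eq_of_colourSum_modEq_of_le col hs hst hij hjm ?_ hdel hcol₀ hcol₁
  refine hu.add_le_add_windowBound hs hst hij hjm hdel hz ?_ ?_
  · rwa [ZMod.natCast_eq_natCast_iff]
  · rwa [ZMod.natCast_eq_natCast_iff]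

theorem Unbordered.eq_of_syndrome_eq (hu : Unbordered u) {i j s : ℕ}
    (col : (confusionGraph A t (2 * windowBound t δ)).Coloring (Fin K))
    (hz : DenseBelow δ m fun p => factor (t + 1) z p = u)
    (hz' : DenseBelow δ m fun p => factor (t + 1) z' p = u)
    (hsyn : syndrome u col m z = syndrome u col m z') (hst : s ≤ t) (him : i + s ≤ m)
    (hjm : j + s ≤ m) (hdel : del z i s = del z' j s) : z = z' := by
  rcases Nat.eq_zero_or_pos s with rfl | hs
  · simpa [del, funext_iff] using hdel
  rcases Nat.le_total i j with hij | hij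
  · exact hu.eq_of_syndrome_eq_of_le col hz hsyn hs hst hij hjm hdel
  · exact (hu.eq_of_syndrome_eq_of_le col hz' hsyn.symm hs hst hij him hdel.symm).symm

end Syndrome

/-! ### Words with dense occurrences of a pattern -/

section Density

/-- The places `ι (l, ·)` are disjoint, so each of them costs one of its values. -/
lemma ncard_avoiding_mul_le {A I κ ℓ : Type*} [Finite A] [Finite I] [Finite κ] [Finite ℓ]
    {ι : κ × ℓ → I} (hι : Function.Injective ι) (u : ℓ → A) :
    {w : I → A | ∀ l, (fun k => w (ι (l, k))) ≠ u}.ncard *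
        (Nat.card A ^ Nat.card ℓ) ^ Nat.card κ ≤
      (Nat.card A ^ Nat.card ℓ - 1) ^ Nat.card κ * Nat.card A ^ Nat.card I := by
  set S := {w : I → A | ∀ l, (fun k => w (ι (l, k))) ≠ u}
  let blocksAndRest (w : S) : (κ → ({u}ᶜ : Set (ℓ → A))) × (↥(Set.range ι)ᶜ → A) :=
    (fun l => ⟨fun k => w.1 (ι (l, k)), w.2 l⟩, fun x => w.1 x)
  have hinj : Function.Injective blocksAndRest := fun w w' h => by
    obtain ⟨hblocks, hrest⟩ := Prod.ext_iff.1 h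
    refine Subtype.ext (funext fun x => ?_)
    by_cases hx : x ∈ Set.range ι
    · obtain ⟨⟨l, k⟩, rfl⟩ := hx
      exact congrFun (congrArg Subtype.val (congrFun hblocks l)) k
    · exact congrFun hrest ⟨x, hx⟩
  have hrange : (Set.range ι).ncard = Nat.card κ * Nat.card ℓ := by
    rw [← Set.image_univ, Set.ncard_image_of_injective _ hι, Set.ncard_univ, Nat.card_prod]
  have hle : Nat.card κ * Nat.card ℓ ≤ Nat.card I := by
    simpa [Nat.card_prod] using Nat.card_le_card_of_injective ι hι
  have hcard := Nat.card_le_card_of_injective _ hinj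
  rw [Nat.card_prod, Nat.card_fun, Nat.card_fun, Nat.card_coe_set_eq, Nat.card_coe_set_eq,
    Nat.card_coe_set_eq, Set.ncard_compl, Set.ncard_compl, Set.ncard_singleton, hrange,
    Nat.card_fun] at hcard
  calc _ ≤ _ := Nat.mul_le_mul_right _ hcard
    _ = _ := by
      rw [mul_assoc, ← pow_mul, ← pow_add, Nat.mul_comm (Nat.card ℓ), Nat.sub_add_cancel hle]

variable {A : Type*} [Finite A] {t L m : ℕ}

lemma ncard_no_occurrence_mul_le {a : ℕ} (ha : a + L * (t + 1) ≤ m) (o : A) (u : Fin (t + 1) → A) :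
    {w : Fin m → A | ∀ p, a ≤ p → p < a + L * (t + 1) → factor (t + 1) (pad o w) p ≠ u}.ncard *
        (Nat.card A ^ (t + 1)) ^ L ≤
      (Nat.card A ^ (t + 1) - 1) ^ L * Nat.card A ^ m := by
  let ι (x : Fin L × Fin (t + 1)) : Fin m := ⟨a + finProdFinEquiv x, by omega⟩
  have hι : Function.Injective ι := fun x y h =>
    finProdFinEquiv.injective (Fin.ext (Nat.add_left_cancel (congrArg Fin.val h)))
  refine (Nat.mul_le_mul_right _ (Set.ncard_le_ncard (fun w hw l h => ?_) (Set.toFinite _))).trans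
    (by simpa using ncard_avoiding_mul_le hι u)
  have hl : (t + 1) * l + (t + 1) ≤ L * (t + 1) := by
    rw [← Nat.mul_succ, Nat.mul_comm L]
    exact Nat.mul_le_mul_left _ l.2
  refine hw (a + (t + 1) * l) (by omega) (by omega) ?_
  rw [← h]
  funext k
  rw [factor, pad_apply (by omega)]
  exact congrArg w (Fin.ext (by simp [ι]; omega))

/-- A union bound over the starting points of the windows of length `L * (t + 1)`. -/
lemma ncard_not_denseBelow_mul_le (o : A) (u : Fin (t + 1) → A) :
    {w : Fin m → A |
        ¬ DenseBelow (L * (t + 1)) m fun p => factor (t + 1) (pad o w) p = u}.ncard *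
        (Nat.card A ^ (t + 1)) ^ L ≤
      (m + 1) * ((Nat.card A ^ (t + 1) - 1) ^ L * Nat.card A ^ m) := by
  set δ := L * (t + 1)
  let bad (a : ℕ) := {w : Fin m → A | a + δ ≤ m ∧
    ∀ p, a ≤ p → p < a + δ → factor (t + 1) (pad o w) p ≠ u}
  have hbad (a : ℕ) : (bad a).ncard * (Nat.card A ^ (t + 1)) ^ L ≤
      (Nat.card A ^ (t + 1) - 1) ^ L * Nat.card A ^ m := by
    by_cases ha : a + δ ≤ m
    · simpa [bad, ha] using ncard_no_occurrence_mul_le ha o u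
    · simp [bad, ha]
  have hcover : {w : Fin m → A | ¬ DenseBelow δ m fun p => factor (t + 1) (pad o w) p = u} ⊆
      ⋃ a ∈ Finset.range (m + 1), bad a := fun w hw => by
    simp only [DenseBelow, Set.mem_ofPred_eq, not_forall, not_exists, not_and] at hw
    obtain ⟨a, ha, hw⟩ := hw
    exact Set.mem_biUnion (by simp; omega) ⟨ha, hw⟩
  calc _ ≤ (∑ a ∈ Finset.range (m + 1), (bad a).ncard) * (Nat.card A ^ (t + 1)) ^ L := by
        gcongr
        exact (Set.ncard_le_ncard hcover).trans (Finset.set_ncard_biUnion_le _ _)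
    _ = ∑ a ∈ Finset.range (m + 1), (bad a).ncard * (Nat.card A ^ (t + 1)) ^ L :=
        Finset.sum_mul _ _ _
    _ ≤ (Finset.range (m + 1)).card • ((Nat.card A ^ (t + 1) - 1) ^ L * Nat.card A ^ m) :=
        Finset.sum_le_card_nsmul _ _ _ fun a _ => hbad a
    _ = _ := by simp

lemma card_pow_le_two_mul_ncard_denseBelow (o : A) (u : Fin (t + 1) → A)
    (hL : 2 * (m + 1) * (Nat.card A ^ (t + 1) - 1) ^ L ≤ (Nat.card A ^ (t + 1)) ^ L) :
    Nat.card A ^ m ≤ 2 * {w : Fin m → A |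
      DenseBelow (L * (t + 1)) m fun p => factor (t + 1) (pad o w) p = u}.ncard := by
  set good := {w : Fin m → A |
    DenseBelow (L * (t + 1)) m fun p => factor (t + 1) (pad o w) p = u}
  have : Nonempty A := ⟨o⟩
  have hpos : 0 < (Nat.card A ^ (t + 1)) ^ L := pow_pos (pow_pos Nat.card_pos _) _
  have hhalf : 2 * goodᶜ.ncard ≤ Nat.card A ^ m := by
    refine Nat.le_of_mul_le_mul_right ?_ hpos
    calc 2 * goodᶜ.ncard * (Nat.card A ^ (t + 1)) ^ L
        ≤ 2 * ((m + 1) * ((Nat.card A ^ (t + 1) - 1) ^ L * Nat.card A ^ m)) := by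
          rw [mul_assoc]
          exact Nat.mul_le_mul_left 2 (ncard_not_denseBelow_mul_le o u)
      _ = 2 * (m + 1) * (Nat.card A ^ (t + 1) - 1) ^ L * Nat.card A ^ m := by ring
      _ ≤ Nat.card A ^ m * (Nat.card A ^ (t + 1)) ^ L := by
          rw [Nat.mul_comm _ ((Nat.card A ^ (t + 1)) ^ L)]
          gcongr
  have hall : good.ncard + goodᶜ.ncard = Nat.card A ^ m := by
    rw [Set.ncard_add_ncard_compl, Nat.card_fun, Nat.card_fin]
  omega

end Density

/-! ### The code -/

lemma exists_ncard_le_card_mul_ncard_fiber {α β : Type*} [Finite α] [Finite β] [Nonempty β]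
    (f : α → β) (S : Set α) : ∃ y, S.ncard ≤ Nat.card β * {x ∈ S | f x = y}.ncard := by
  classical
  have := Fintype.ofFinite β
  lift S to Finset α using S.toFinite
  obtain ⟨y, hy⟩ := Finite.exists_max fun y => (S.filter (f · = y)).card
  refine ⟨y, ?_⟩
  have hfiber : {x ∈ (S : Set α) | f x = y} = S.filter (f · = y) := by simp
  rw [hfiber, Set.ncard_coe_finset, Set.ncard_coe_finset,
    Finset.card_eq_sum_card_fiberwise (t := Finset.univ) (f := f) (by simp)]
  refine (Finset.sum_le_card_nsmul _ _ _ fun y' _ => hy y').trans_eq ?_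
  simp [Nat.card_eq_fintype_card]

/-- The number of values of the syndrome for patterns of length `t + 1` that are `δ`-dense in words
of length `m` over `Q` letters. -/
def numSyndromes (t δ m Q : ℕ) : ℕ :=
  5 * ((2 * m + 1) * numColours t (2 * windowBound t δ) Q ^ 2)

theorem Unbordered.exists_set_words {A : Type*} [Finite A] {t L m : ℕ} {u : Fin (t + 1) → A}
    (hu : Unbordered u) (o : A)
    (hL : 2 * (m + 1) * (Nat.card A ^ (t + 1) - 1) ^ L ≤ (Nat.card A ^ (t + 1)) ^ L) :
    ∃ S : Set (Fin m → A),
      (∀ w ∈ S, ∀ w' ∈ S, ∀ s ≤ t, ∀ i j, i + s ≤ m → j + s ≤ m →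
        del (pad o w) i s = del (pad o w') j s → w = w') ∧
      Nat.card A ^ m ≤ 2 * numSyndromes t (L * (t + 1)) m (Nat.card A) * S.ncard := by
  classical
  have : Nonempty A := ⟨o⟩
  set K := numColours t (2 * windowBound t (L * (t + 1))) (Nat.card A) with hK
  have : NeZero K := ⟨Nat.succ_ne_zero _⟩
  obtain ⟨col⟩ : (confusionGraph A t (2 * windowBound t (L * (t + 1)))).Colorable K :=
    confusionGraph_colorable
  have hdense := card_pow_le_two_mul_ncard_denseBelow o u hL
  set good := {w : Fin m → A |
    DenseBelow (L * (t + 1)) m fun p => factor (t + 1) (pad o w) p = u}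
  obtain ⟨y, hy⟩ :=
    exists_ncard_le_card_mul_ncard_fiber (fun w => syndrome u col m (pad o w)) good
  refine ⟨{w ∈ good | syndrome u col m (pad o w) = y}, ?_, ?_⟩
  · rintro w ⟨hw, hwy⟩ w' ⟨hw', hwy'⟩ s hst i j hi hj hdel
    have := hu.eq_of_syndrome_eq col hw hw' (hwy.trans hwy'.symm) hst hi hj hdel
    rw [← factor_pad o w, this, factor_pad]
  · refine hdense.trans ((Nat.mul_le_mul_left 2 hy).trans_eq ?_)
    simp only [numSyndromes, ← hK, Nat.card_prod, Nat.card_zmod]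
    ring

/-! ### Words as lists -/

/-- `Σ_q^k`, the words of length `k` over `Σ_q`, as in the statement of the theorem. -/
def words (q k : ℕ) : Set (List ℕ) :=
  {x | x.length = k ∧ ∀ a ∈ x, a < q}

/-- The list of the letters of `w`. -/
def toList {q m : ℕ} (w : Fin m → Fin q) : List ℕ :=
  List.ofFn fun k => (w k : ℕ)

section Lists

variable {q m : ℕ}

lemma toList_injective : Function.Injective (toList : (Fin m → Fin q) → List ℕ) := fun _ _ h =>
  funext fun k => Fin.ext (congrFun (List.ofFn_injective h) k)

lemma range_toList : Set.range (toList : (Fin m → Fin q) → List ℕ) = words q m := by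
  ext x
  constructor
  · rintro ⟨w, rfl⟩
    simp [words, toList]
  · rintro ⟨rfl, hx⟩
    exact ⟨fun k => ⟨x[k], hx _ (List.getElem_mem _)⟩, by simp [toList]⟩

lemma ncard_words : (words q m).ncard = q ^ m := by
  rw [← range_toList, ← Set.image_univ, Set.ncard_image_of_injective _ toList_injective,
    Set.ncard_univ, Nat.card_fun, Nat.card_fin, Nat.card_fin]

lemma finite_words : (words q m).Finite :=
  range_toList ▸ Set.finite_range _

lemma getD_take_append_drop {α : Type*} {x : List α} {i s : ℕ} (h : i + s ≤ x.length) (d : α) :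
    ((x.take i ++ x.drop (i + s)).getD · d) = del (x.getD · d) i s := by
  funext p
  have hlength : (x.take i).length = i := by simp; omega
  simp only [del, List.getD_eq_getElem?_getD]
  split_ifs with hp
  · rw [List.getElem?_append_left (by omega), List.getElem?_take_of_lt hp]
  · rw [List.getElem?_append_right (by omega), hlength, List.getElem?_drop]
    congr 2
    omega

lemma getD_toList [NeZero q] (w : Fin m → Fin q) :
    ((toList w).getD · 0) = fun p => ((pad 0 w p : Fin q) : ℕ) := by
  funext p
  by_cases hp : p < m <;> simp [toList, pad, hp]

lemma exists_del_pad_eq [NeZero q] {t : ℕ} {w w' : Fin m → Fin q}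
    (h : (burstLe t (toList w) ∩ burstLe t (toList w')).Nonempty) :
    ∃ s ≤ t, ∃ i j, i + s ≤ m ∧ j + s ≤ m ∧ del (pad 0 w) i s = del (pad 0 w') j s := by
  obtain ⟨y, ⟨s, hst, i, hi, hy⟩, ⟨s', -, j, hj, hy'⟩⟩ := h
  have hlength (w : Fin m → Fin q) : (toList w).length = m := List.length_ofFn
  obtain rfl : s = s' := by
    have hlen := congrArg List.length (hy.symm.trans hy')
    simp only [List.length_append, List.length_take, List.length_drop, hlength] at hlen hi hj
    omega
  refine ⟨s, hst, i, j, by simpa [hlength] using hi, by simpa [hlength] using hj, ?_⟩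
  have hval (w : Fin m → Fin q) (i p : ℕ) :
      ((del (pad 0 w) i s p : Fin q) : ℕ) = del ((toList w).getD · 0) i s p := by
    rw [getD_toList]
    exact apply_ite _ _ _ _
  funext p
  rw [← Fin.val_inj, hval, hval, ← getD_take_append_drop hi, ← getD_take_append_drop hj, ← hy,
    ← hy']

end Lists

/-! ### Parameters -/

lemma windowBound_mul_le {ℓ : ℕ} (hℓ : 1 ≤ ℓ) (t δ : ℕ) :
    windowBound t (δ * ℓ) ≤ windowBound t δ * ℓ := by
  simp only [windowBound]
  calc (5 * t + 1) * (δ * ℓ) + 2 * t ≤ (5 * t + 1) * (δ * ℓ) + 2 * t * ℓ :=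
        Nat.add_le_add_left (Nat.le_mul_of_pos_right _ hℓ) _
    _ = _ := by ring

lemma numColours_mul_le {ℓ : ℕ} (hℓ : 1 ≤ ℓ) (t B Q : ℕ) :
    numColours t (B * ℓ) Q ≤ numColours t B Q * ℓ ^ 2 := by
  have hB : B * ℓ + 1 ≤ (B + 1) * ℓ := by linarith
  have hone : 1 ≤ ℓ ^ 2 := Nat.one_le_pow _ _ hℓ
  simp only [numColours]
  calc (t + 1) * ((B * ℓ + 1) * ((B * ℓ + 1) * Q ^ t)) + 1
      ≤ (t + 1) * ((B + 1) * ℓ * ((B + 1) * ℓ * Q ^ t)) + ℓ ^ 2 := by gcongr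
    _ = _ := by ring

lemma numColours_mono {B B' : ℕ} (h : B ≤ B') (t Q : ℕ) : numColours t B Q ≤ numColours t B' Q := by
  simp only [numColours]
  gcongr

lemma numSyndromes_mul_le {ℓ m : ℕ} (hℓ : 1 ≤ ℓ) (hm : 1 ≤ m) (t δ Q : ℕ) :
    numSyndromes t (δ * ℓ) m Q ≤
      15 * numColours t (2 * windowBound t δ) Q ^ 2 * (m * ℓ ^ 4) := by
  have hcol : numColours t (2 * windowBound t (δ * ℓ)) Q ≤
      numColours t (2 * windowBound t δ) Q * ℓ ^ 2 := by
    refine (numColours_mono ?_ t Q).trans (numColours_mul_le hℓ t _ Q)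
    rw [Nat.mul_assoc]
    exact Nat.mul_le_mul_left 2 (windowBound_mul_le hℓ t δ)
  calc numSyndromes t (δ * ℓ) m Q
      ≤ 5 * (3 * m * (numColours t (2 * windowBound t δ) Q * ℓ ^ 2) ^ 2) := by
        simp only [numSyndromes]
        gcongr
        omega
    _ = _ := by ring

lemma exists_mul_pow_le_pow {a D : ℕ} (h : a < D) (b : ℕ) : ∃ c, b * a ^ c ≤ D ^ c := by
  have hD : (0 : ℚ) < D := by exact_mod_cast Nat.zero_lt_of_lt h
  obtain ⟨c, hc⟩ := exists_pow_lt_of_lt_one (show (0 : ℚ) < 1 / (b + 1) by positivity)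
    ((div_lt_one hD).2 (by exact_mod_cast h : (a : ℚ) < D))
  refine ⟨c, ?_⟩
  rw [div_pow, div_lt_div_iff₀ (by positivity) (by positivity), one_mul] at hc
  have : a ^ c * (b + 1) < D ^ c := by exact_mod_cast hc
  calc b * a ^ c ≤ a ^ c * (b + 1) := by rw [Nat.mul_comm]; gcongr; exact b.le_succ
    _ ≤ D ^ c := this.le

lemma two_mul_succ_le_eight_pow_log {m : ℕ} (hm : 2 ≤ m) : 2 * (m + 1) ≤ 8 ^ Nat.log 2 m := by
  have hlt := Nat.lt_pow_succ_log_self (b := 2) (by norm_num) m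
  have hlog : 1 ≤ Nat.log 2 m := Nat.log_pos (by norm_num) hm
  calc 2 * (m + 1) ≤ 4 ^ 1 * 2 ^ Nat.log 2 m := by omega
    _ ≤ 4 ^ Nat.log 2 m * 2 ^ Nat.log 2 m := by gcongr; norm_num
    _ = 8 ^ Nat.log 2 m := by rw [← mul_pow]; norm_num

/-- Windows of logarithmic length already all contain the pattern in at least half of the words. -/
theorem exists_pairwiseDisjoint_burstLe {q : ℕ} (hq : 2 ≤ q) (t : ℕ) :
    ∃ C, ∀ m ≥ 2, ∃ 𝒞 ⊆ words q m, 𝒞.PairwiseDisjoint (burstLe t) ∧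
      q ^ m ≤ C * (m * Nat.log 2 m ^ 4) * 𝒞.ncard := by
  have : NeZero q := ⟨by omega⟩
  have hne : (0 : Fin q) ≠ ⟨1, hq⟩ := by simp [Fin.ext_iff]
  set D := q ^ (t + 1)
  have hD : 0 < D := pow_pos (by omega) _
  obtain ⟨c, hc⟩ := exists_mul_pow_le_pow (Nat.sub_lt hD one_pos) 8
  refine ⟨2 * (15 * numColours t (2 * windowBound t (c * (t + 1))) q ^ 2), fun m hm => ?_⟩
  have hdense : 2 * (m + 1) * (D - 1) ^ (c * Nat.log 2 m) ≤ D ^ (c * Nat.log 2 m) :=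
    calc _ ≤ 8 ^ Nat.log 2 m * (D - 1) ^ (c * Nat.log 2 m) :=
          Nat.mul_le_mul_right _ (two_mul_succ_le_eight_pow_log hm)
      _ = (8 * (D - 1) ^ c) ^ Nat.log 2 m := by rw [mul_pow, pow_mul]
      _ ≤ _ := by
        rw [pow_mul]
        exact Nat.pow_le_pow_left hc _
  obtain ⟨S, hS, hcard⟩ := (unbordered_cons hne).exists_set_words (t := t) (m := m) 0
    (by rwa [Nat.card_fin])
  refine ⟨toList '' S, ?_, ?_, ?_⟩
  · rw [← range_toList]
    exact Set.image_subset_range _ _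
  · rintro _ ⟨w, hw, rfl⟩ _ ⟨w', hw', rfl⟩ hww'
    refine Set.disjoint_iff_inter_eq_empty.2 (Set.not_nonempty_iff_eq_empty.1 fun h => hww' ?_)
    obtain ⟨s, hst, i, j, hi, hj, hdel⟩ := exists_del_pad_eq h
    rw [hS w hw w' hw' s hst i j hi hj hdel]
  · rw [Nat.card_fin] at hcard
    rw [Set.ncard_image_of_injective _ toList_injective]
    refine hcard.trans (Nat.mul_le_mul_right _ ?_)
    rw [Nat.mul_assoc 2, Nat.mul_right_comm c]
    exact Nat.mul_le_mul_left 2 (numSyndromes_mul_le (Nat.log_pos (by norm_num) hm) (by omega) ..)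

/-! ### Redundancy -/

open Filter Asymptotics

lemma eventually_mul_logb_le (c : ℝ) : ∀ᶠ x : ℝ in atTop, c * Real.logb 2 x ≤ x := by
  have hlog : (fun x : ℝ => c * Real.logb 2 x) =o[atTop] id := by
    have := Real.isLittleO_log_id_atTop.const_mul_left (c / Real.log 2)
    exact this.congr_left fun x => by simp only [Real.logb]; ring
  filter_upwards [hlog.def one_pos, eventually_ge_atTop 0] with x hx hx0
  rw [id, one_mul, Real.norm_of_nonneg hx0] at hx
  exact (le_abs_self _).trans hx

lemma tendsto_logb_natCast_atTop : Tendsto (fun n : ℕ => Real.logb 2 n) atTop atTop :=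
  (Real.tendsto_logb_atTop one_lt_two).comp tendsto_natCast_atTop_atTop

lemma rpow_logb_add_mul_logb_div_logb {b a x y : ℝ} (hb : 0 < b) (hb' : b ≠ 1) (ha : 1 < a)
    (hx : 0 < x) (hy : 0 < y) (κ : ℝ) :
    a ^ ((Real.logb b x + κ * Real.logb b y) / Real.logb b a) = x * y ^ κ := by
  have ha0 : 0 < a := one_pos.trans ha
  rw [← Real.log_injOn_pos.eq_iff (Set.mem_Ioi.2 (by positivity)) (Set.mem_Ioi.2 (by positivity)),
    Real.log_rpow ha0, Real.log_mul hx.ne' (by positivity), Real.log_rpow hy]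
  have hlogb : Real.log b ≠ 0 := Real.log_ne_zero_of_pos_of_ne_one hb hb'
  have hloga : Real.log a ≠ 0 := Real.log_ne_zero_of_pos_of_ne_one ha0 ha.ne'
  simp only [Real.logb]
  field_simp

lemma rpow_le_pow_floor_mul {a : ℝ} (ha : 1 ≤ a) (y : ℝ) : a ^ y ≤ a ^ ⌊y⌋₊ * a := by
  rw [← pow_succ, ← Real.rpow_natCast]
  exact Real.rpow_le_rpow_of_exponent_le ha (by exact_mod_cast (Nat.lt_floor_add_one y).le)

lemma eventually_exists_redundancy {q k : ℕ} {κ : ℝ} (hq : 2 ≤ q) (hκ : k < κ) (C : ℕ) :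
    ∀ᶠ n : ℕ in atTop, ∃ r ≤ n,
      (r : ℝ) ≤ (Real.logb 2 n + κ * Real.logb 2 (Real.logb 2 n)) / Real.logb 2 q ∧
        C * (n * Nat.log 2 n ^ k) ≤ q ^ r := by
  have hκ0 : 0 < κ := k.cast_nonneg.trans_lt hκ
  have hq1 : (1 : ℝ) < q := by exact_mod_cast hq
  have hlogq : 1 ≤ Real.logb 2 q := by
    rw [Real.le_logb_iff_rpow_le one_lt_two (one_pos.trans hq1), Real.rpow_one]
    exact_mod_cast hq
  filter_upwards [eventually_gt_atTop 0, tendsto_logb_natCast_atTop.eventually_ge_atTop 1,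
    tendsto_logb_natCast_atTop.eventually (eventually_mul_logb_le 1),
    tendsto_natCast_atTop_atTop.eventually (eventually_mul_logb_le (1 + κ)),
    ((tendsto_rpow_atTop (sub_pos.2 hκ)).comp
      tendsto_logb_natCast_atTop).eventually_ge_atTop (C * q)]
    with n hn hlog hloglog hlogn hC
  have hpos : 0 < Real.logb 2 n := one_pos.trans_le hlog
  set bits := Real.logb 2 n + κ * Real.logb 2 (Real.logb 2 n)
  have hbits : 0 ≤ bits := by
    have := Real.logb_nonneg one_lt_two hlog
    positivity
  have hr := Nat.floor_le (div_nonneg hbits (zero_le_one.trans hlogq))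
  refine ⟨⌊bits / Real.logb 2 q⌋₊, ?_, hr, ?_⟩
  · have hbitsn : bits ≤ n := by nlinarith
    exact_mod_cast hr.trans ((div_le_self hbits hlogq).trans hbitsn)
  · have hlogk : (Nat.log 2 n : ℝ) ^ k ≤ Real.logb 2 n ^ k := by
      gcongr
      exact Real.natLog_le_logb n 2
    suffices (C * (n * Nat.log 2 n ^ k) : ℝ) ≤ (q : ℝ) ^ ⌊bits / Real.logb 2 q⌋₊ by
      exact_mod_cast this
    refine le_of_mul_le_mul_right ?_ (one_pos.trans hq1)
    calc (C * (n * Nat.log 2 n ^ k) * q : ℝ) = n * (Nat.log 2 n ^ k * (C * q)) := by ring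
      _ ≤ n * (Real.logb 2 n ^ k * Real.logb 2 n ^ (κ - k)) := by gcongr; exact hC
      _ = n * Real.logb 2 n ^ κ := by
        rw [← Real.rpow_natCast, ← Real.rpow_add hpos, add_sub_cancel]
      _ = (q : ℝ) ^ (bits / Real.logb 2 q) :=
        (rpow_logb_add_mul_logb_div_logb two_pos (by norm_num) hq1 (by exact_mod_cast hn) hpos
          κ).symm
      _ ≤ _ := rpow_le_pow_floor_mul hq1.le _

lemma log_two_le_two_mul_log_two {m n : ℕ} (hn : 2 ≤ n) (hm : m ≤ 2 * n) :
    Nat.log 2 m ≤ 2 * Nat.log 2 n := by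
  have hlog : 1 ≤ Nat.log 2 n := Nat.log_pos one_lt_two hn
  calc Nat.log 2 m ≤ Nat.log 2 (n * 2) := Nat.log_mono_right (by omega)
    _ = Nat.log 2 n + 1 := Nat.log_mul_base one_lt_two (by omega)
    _ ≤ 2 * Nat.log 2 n := by omega

theorem eventually_exists_pairwiseDisjoint_burstLe {q : ℕ} (hq : 2 ≤ q) (t : ℕ) {κ : ℝ}
    (hκ : 4 < κ) :
    ∀ᶠ n : ℕ in atTop, ∃ m : ℕ,
      (m : ℝ) - (n - 1) ≤
        (Real.logb 2 n + κ * Real.logb 2 (Real.logb 2 n)) / Real.logb 2 q ∧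
      ∃ 𝒞 ⊆ words q m, 𝒞.PairwiseDisjoint (burstLe t) ∧ q ^ (n - 1) ≤ 𝒞.ncard := by
  obtain ⟨C, hC⟩ := exists_pairwiseDisjoint_burstLe hq t
  filter_upwards [eventually_exists_redundancy (k := 4) hq (by exact_mod_cast hκ) (32 * C),
    eventually_ge_atTop 3] with n ⟨r, hrn, hr, hqr⟩ hn
  obtain ⟨𝒞, hwords, hdisj, hcard⟩ := hC (n - 1 + r) (by omega)
  refine ⟨n - 1 + r, ?_, 𝒞, hwords, hdisj, ?_⟩
  · rw [Nat.cast_add, Nat.cast_pred (by omega), add_sub_cancel_left]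
    exact hr
  · refine Nat.le_of_mul_le_mul_right ?_ (pow_pos (by omega : 0 < q) r)
    calc q ^ (n - 1) * q ^ r ≤ C * ((n - 1 + r) * Nat.log 2 (n - 1 + r) ^ 4) * 𝒞.ncard := by
          rwa [← pow_add]
      _ ≤ C * (2 * n * (2 * Nat.log 2 n) ^ 4) * 𝒞.ncard := by
          gcongr
          · omega
          · exact log_two_le_two_mul_log_two (by omega) (by omega)
      _ = 𝒞.ncard * (32 * C * (n * Nat.log 2 n ^ 4)) := by ring
      _ ≤ 𝒞.ncard * q ^ r := Nat.mul_le_mul_left _ hqr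

end BurstCode

open BurstCode in
theorem exists_burst_correcting_code_general (q t : ℕ) (κ : ℝ) (hq : 2 ≤ q) (hκ : 4 < κ) :
    ∃ n₀ : ℕ, ∀ n ≥ n₀, ∃ m : ℕ, ∃ E : List ℕ → List ℕ,
      ((m : ℝ) - ((n : ℝ) - 1)
          ≤ (Real.logb 2 n + κ * Real.logb 2 (Real.logb 2 n)) / Real.logb 2 q) ∧
      (∀ u : List ℕ, u.length = n - 1 → (∀ a ∈ u, a < q) →
        (E u).length = m ∧ ∀ a ∈ E u, a < q) ∧
      (∀ u u' : List ℕ, u.length = n - 1 → (∀ a ∈ u, a < q) →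
        u'.length = n - 1 → (∀ a ∈ u', a < q) →
        E u = E u' → u = u') ∧
      (∀ u u' : List ℕ, u.length = n - 1 → (∀ a ∈ u, a < q) →
        u'.length = n - 1 → (∀ a ∈ u', a < q) →
        (burstLe t (E u) ∩ burstLe t (E u')).Nonempty → E u = E u') := by
  obtain ⟨n₀, hn₀⟩ := Filter.eventually_atTop.1 (eventually_exists_pairwiseDisjoint_burstLe hq t hκ)
  refine ⟨n₀, fun n hn => ?_⟩
  obtain ⟨m, hm, 𝒞, h𝒞, hdisj, hcard⟩ := hn₀ n hn
  have hfinite : 𝒞.Finite := finite_words.subset h𝒞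
  obtain ⟨E, hE, hinj⟩ : ∃ E, words q (n - 1) ⊆ E ⁻¹' 𝒞 ∧ Set.InjOn E (words q (n - 1)) := by
    refine finite_words.exists_injOn_of_encard_le ?_
    rw [← finite_words.cast_ncard_eq, ← hfinite.cast_ncard_eq, ncard_words]
    exact_mod_cast hcard
  refine ⟨m, E, hm, fun u hu hu' => h𝒞 (hE ⟨hu, hu'⟩), ?_, ?_⟩
  · exact fun u v hu hu' hv hv' => hinj ⟨hu, hu'⟩ ⟨hv, hv'⟩
  · exact fun u v hu hu' hv hv' h => hdisj.elim (hE ⟨hu, hu'⟩) (hE ⟨hv, hv'⟩)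
      (Set.not_disjoint_iff_nonempty_inter.2 h)

/-- main theorem: for fixed `q > 2`, `t ≥ 1` and `ε > 0`,
for all large enough `n` there are a length `m` with redundancy
`m − (n−1) ≤ (log₂ n + (8+ε)·log₂ log₂ n)/log₂ q` symbols and an injective
encoder `E : Σ_q^{n−1} → Σ_q^m` whose image is a code correcting any burst
of at most `t` deletions. -/
theorem exists_burst_correcting_code
    (q t : ℕ) (ε : ℝ) (hq : 2 < q) (ht : 1 ≤ t) (hε : 0 < ε) :
    ∃ n₀ : ℕ, ∀ n ≥ n₀, ∃ m : ℕ, ∃ E : List ℕ → List ℕ,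
      ((m : ℝ) - ((n : ℝ) - 1)
          ≤ (Real.logb 2 n + (8 + ε) * Real.logb 2 (Real.logb 2 n)) /
              Real.logb 2 q) ∧
      (∀ u : List ℕ, u.length = n - 1 → (∀ a ∈ u, a < q) →
        (E u).length = m ∧ ∀ a ∈ E u, a < q) ∧
      (∀ u u' : List ℕ, u.length = n - 1 → (∀ a ∈ u, a < q) →
        u'.length = n - 1 → (∀ a ∈ u', a < q) →
        E u = E u' → u = u') ∧
      (∀ u u' : List ℕ, u.length = n - 1 → (∀ a ∈ u, a < q) →
        u'.length = n - 1 → (∀ a ∈ u', a < q) →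
        (burstLe t (E u) ∩ burstLe t (E u')).Nonempty → E u = E u') :=
  exists_burst_correcting_code_general q t (8 + ε) hq.le (by linarith)
end
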